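/- arXiv:1911.12140 — 2 statements merged into one kernel-verified Lean document; each statement's English description precedes it below -/
import Mathlib

section
/- For every m ≥ 1, σ_m(x) = Σ_{k=1}^{m−1} (−1)^k i_k/(q_1 ⋯ q_k) + Σ_{l=m+1}^∞ (−1)^{l−1} i_l/(q_1 ⋯ q_{m−1} q_{m+1} ⋯ q_l) = −q_m·x + (1 + q_m)·Σ_{k=1}^{m−1} (−1)^k i_k/(q_1 q_2 ⋯ q_k) + (−1)^m i_m/(q_1 ⋯ q_{m−1}). -/
/-- `q_1 q_2 ⋯ q_n` (1-based indexing; `prodQ q 0 = 1`). -/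
noncomputable def prodQ (q : ℕ → ℕ) (n : ℕ) : ℝ :=
  ∏ j ∈ Finset.Icc 1 n, (q j : ℝ)

/-- The positive Cantor series value `x = Σ_{n=1}^∞ i_n/(q_1 ⋯ q_n)`. -/
noncomputable def cantorVal (q i : ℕ → ℕ) : ℝ :=
  ∑' n : ℕ, (i (n + 1) : ℝ) / prodQ q (n + 1)

/-- The generalized shift operator
`σ_m = Σ_{k=1}^{m-1} i_k/(q_1⋯q_k) + Σ_{l=m+1}^∞ i_l/(q_1⋯q_{m-1} q_{m+1}⋯q_l)`. -/
noncomputable def sigmaC (q i : ℕ → ℕ) (m : ℕ) : ℝ :=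
  (∑ k ∈ Finset.Icc 1 (m - 1), (i k : ℝ) / prodQ q k) +
    ∑' t : ℕ, (i (m + 1 + t) : ℝ) /
      (prodQ q (m - 1) * ∏ j ∈ Finset.Icc (m + 1) (m + 1 + t), (q j : ℝ))

/-- The `m`-fold shift `σ^m(x) = Σ_{k=m+1}^∞ i_k/(q_{m+1} ⋯ q_k)`. -/
noncomputable def shiftVal (q i : ℕ → ℕ) (m : ℕ) : ℝ :=
  ∑' t : ℕ, (i (m + 1 + t) : ℝ) / ∏ j ∈ Finset.Icc (m + 1) (m + 1 + t), (q j : ℝ)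

/-- The alternating Cantor series value `x = Σ_{n=1}^∞ (-1)^n i_n/(q_1 ⋯ q_n)`. -/
noncomputable def altCantorVal (q i : ℕ → ℕ) : ℝ :=
  ∑' n : ℕ, (-1 : ℝ) ^ (n + 1) * (i (n + 1) : ℝ) / prodQ q (n + 1)

/-- The generalized shift operator for alternating Cantor series:
`σ_m = Σ_{k=1}^{m-1} (-1)^k i_k/(q_1⋯q_k)
      + Σ_{l=m+1}^∞ (-1)^{l-1} i_l/(q_1⋯q_{m-1} q_{m+1}⋯q_l)`. -/
noncomputable def altSigma (q i : ℕ → ℕ) (m : ℕ) : ℝ :=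
  (∑ k ∈ Finset.Icc 1 (m - 1), (-1 : ℝ) ^ k * (i k : ℝ) / prodQ q k) +
    ∑' t : ℕ, (-1 : ℝ) ^ (m + t) * (i (m + 1 + t) : ℝ) /
      (prodQ q (m - 1) * ∏ j ∈ Finset.Icc (m + 1) (m + 1 + t), (q j : ℝ))

theorem prodQ_succ_aux (q : ℕ → ℕ) (n : ℕ) : prodQ q (n + 1) = prodQ q n * (q (n + 1) : ℝ) := by
  unfold prodQ
  rw [Finset.prod_Icc_succ_top (by omega)]

theorem prodQ_ge_aux (q : ℕ → ℕ) (hq : ∀ n, 1 ≤ n → 2 ≤ q n) (n : ℕ) :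
    (2 : ℝ) ^ n ≤ prodQ q n := by
  induction n with
  | zero => simp [prodQ]
  | succ n ih =>
    rw [prodQ_succ_aux, pow_succ]
    have : (2 : ℝ) ≤ q (n + 1) := by exact_mod_cast hq (n + 1) (by omega)
    exact mul_le_mul ih this (by norm_num) (le_trans (by positivity) ih)

theorem prodQ_split_aux (q : ℕ → ℕ) (m t : ℕ) :
    prodQ q (m + t) = prodQ q m * ∏ j ∈ Finset.Icc (m + 1) (m + t), (q j : ℝ) := by
  induction t with
  | zero => simp
  | succ t ih =>
    rw [← add_assoc, prodQ_succ_aux, ih, Finset.prod_Icc_succ_top (by omega), mul_assoc]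

theorem summable_aux (q i : ℕ → ℕ) (hq : ∀ n, 1 ≤ n → 2 ≤ q n)
    (hi : ∀ n, 1 ≤ n → i n ≤ q n - 1) :
    Summable (fun n : ℕ => (-1 : ℝ) ^ (n + 1) * (i (n + 1) : ℝ) / prodQ q (n + 1)) := by
  refine Summable.of_norm_bounded (g := fun n : ℕ => ((1 : ℝ) / 2) ^ n)
    (summable_geometric_of_lt_one (by norm_num) (by norm_num)) ?_
  intro n
  have h1 := prodQ_ge_aux q hq n
  have h0 : (0 : ℝ) < 2 ^ n := by positivity
  have hp : 0 < prodQ q n := lt_of_lt_of_le h0 h1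
  have hq2 := hq (n + 1) (by omega)
  have hq0 : (0 : ℝ) < q (n + 1) := by exact_mod_cast (by omega : 0 < q (n + 1))
  have hiq : (i (n + 1) : ℝ) ≤ q (n + 1) := by
    have := hi (n + 1) (by omega)
    exact_mod_cast (by omega : i (n + 1) ≤ q (n + 1))
  rw [prodQ_succ_aux, norm_div, norm_mul, norm_pow, norm_neg, norm_one, one_pow, one_mul,
    Real.norm_of_nonneg (by positivity), Real.norm_of_nonneg (by positivity), div_pow, one_pow,
    div_le_div_iff₀ (by positivity) h0]
  nlinarith [mul_le_mul hiq h1 h0.le hq0.le]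

theorem stmt_11 (q i : ℕ → ℕ) (hq : ∀ n, 1 ≤ n → 2 ≤ q n)
    (hi : ∀ n, 1 ≤ n → i n ≤ q n - 1) (m : ℕ) (hm : 1 ≤ m) :
    altSigma q i m =
      -(q m : ℝ) * altCantorVal q i +
        (1 + (q m : ℝ)) * (∑ k ∈ Finset.Icc 1 (m - 1), (-1 : ℝ) ^ k * (i k : ℝ) / prodQ q k) +
        (-1 : ℝ) ^ m * (i m : ℝ) / prodQ q (m - 1) := by
  obtain ⟨p, rfl⟩ : ∃ p, m = p + 1 := ⟨m - 1, by omega⟩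
  have hS : (∑ k ∈ Finset.Icc 1 p, (-1 : ℝ) ^ k * (i k : ℝ) / prodQ q k) =
      ∑ n ∈ Finset.range p, (-1 : ℝ) ^ (n + 1) * (i (n + 1) : ℝ) / prodQ q (n + 1) := by
    clear hm
    induction p with
    | zero => simp
    | succ p ih => rw [Finset.sum_Icc_succ_top (by omega), ih, Finset.sum_range_succ]
  have hx := (summable_aux q i hq hi).sum_add_tsum_nat_add (p + 1)
  rw [Finset.sum_range_succ, ← hS] at hx
  have hq2 := hq (p + 1) (by omega)
  have hq0 : (q (p + 1) : ℝ) ≠ 0 := by exact_mod_cast (by omega : q (p + 1) ≠ 0)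
  have hp : prodQ q p ≠ 0 :=
    (lt_of_lt_of_le (by positivity) (prodQ_ge_aux q hq p)).ne'
  have hT : (∑' t : ℕ, (-1 : ℝ) ^ (p + 1 + t) * (i (p + 1 + 1 + t) : ℝ) /
      (prodQ q p * ∏ j ∈ Finset.Icc (p + 1 + 1) (p + 1 + 1 + t), (q j : ℝ))) =
      -(q (p + 1) : ℝ) * ∑' n : ℕ, (-1 : ℝ) ^ (n + (p + 1) + 1) *
        (i (n + (p + 1) + 1) : ℝ) / prodQ q (n + (p + 1) + 1) := by
    rw [← tsum_mul_left]
    refine tsum_congr fun t => ?_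
    have e : t + (p + 1) + 1 = p + 1 + (1 + t) := by ring
    have e2 : p + 1 + 1 + t = p + 1 + (1 + t) := by ring
    rw [e, e2, prodQ_split_aux, prodQ_succ_aux]
    have hR : (∏ j ∈ Finset.Icc (p + 1 + 1) (p + 1 + (1 + t)), (q j : ℝ)) ≠ 0 := by
      refine Finset.prod_ne_zero_iff.mpr fun j hj => ?_
      have h1 := (Finset.mem_Icc.mp hj).1
      have := hq j (by omega)
      exact_mod_cast (by omega : q j ≠ 0)
    have e3 : (-1 : ℝ) ^ (p + 1 + (1 + t)) = -(-1 : ℝ) ^ (p + 1 + t) := by ring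
    rw [e3]
    field_simp
  unfold altSigma altCantorVal
  simp only [Nat.add_sub_cancel]
  rw [hT, ← hx, prodQ_succ_aux]
  field_simp
  ring
end

section
/- Fix m ≥ 1. If (i_n) and (i'_n) are two digit sequences with i_k = i'_k for all k ≤ m, with sign-variable Q̃-expansion values x and x' respectively, then σ_m(x) − σ_m(x') = (x − x')/q_{i_m,m}. In particular, on each cylinder set of digit sequences with fixed first m digits, σ_m is an affine function of x (with slope 1/q_{i_m,m}), i.e., σ_m is a piecewise linear function. -/
/-- `a_{d,n} = Σ_{t=0}^{d-1} q_{t,n}` (so `a_{0,n} = 0`). -/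
noncomputable def aQt (qt : ℕ → ℕ → ℝ) (d n : ℕ) : ℝ :=
  ∑ t ∈ Finset.range d, qt t n

/-- `∏_{j=1}^{n} q_{i_j,j}` (1-based indexing; `prodQt qt i 0 = 1`). -/
noncomputable def prodQt (qt : ℕ → ℕ → ℝ) (i : ℕ → ℕ) (n : ℕ) : ℝ :=
  ∏ j ∈ Finset.Icc 1 n, qt (i j) j

/-- The positive `Q̃`-expansion value
`x = a_{i_1,1} + Σ_{n=2}^∞ a_{i_n,n} ∏_{j=1}^{n-1} q_{i_j,j}`. -/
noncomputable def qtVal (qt : ℕ → ℕ → ℝ) (i : ℕ → ℕ) : ℝ :=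
  aQt qt (i 1) 1 + ∑' t : ℕ, aQt qt (i (t + 2)) (t + 2) * prodQt qt i (t + 1)

/-- The generalized shift operator for `Q̃`-expansions:
`σ_m = a_{i_1,1} + Σ_{n=2}^{m-1} a_{i_n,n} ∏_{j=1}^{n-1} q_{i_j,j}
      + Σ_{l=m+1}^∞ a_{i_l,l} ∏_{j=1, j≠m}^{l-1} q_{i_j,j}`
(the first two summands form the partial sum `Σ_{n=1}^{m-1}`, empty when `m = 1`). -/
noncomputable def qtSigma (qt : ℕ → ℕ → ℝ) (i : ℕ → ℕ) (m : ℕ) : ℝ :=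
  (∑ n ∈ Finset.Icc 1 (m - 1), aQt qt (i n) n * prodQt qt i (n - 1)) +
    ∑' t : ℕ, aQt qt (i (m + 1 + t)) (m + 1 + t) *
      (prodQt qt i (m - 1) * ∏ j ∈ Finset.Icc (m + 1) (m + t), qt (i j) j)

/-- `σ^m(x) = Σ_{l=m+1}^∞ a_{i_l,l} ∏_{j=m+1}^{l-1} q_{i_j,j}`. -/
noncomputable def qtShift (qt : ℕ → ℕ → ℝ) (i : ℕ → ℕ) (m : ℕ) : ℝ :=
  ∑' t : ℕ, aQt qt (i (m + 1 + t)) (m + 1 + t) * ∏ j ∈ Finset.Icc (m + 1) (m + t), qt (i j) j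

-- `(-1)^{ρ_n}` where `ρ_n = 1` if `n ∈ N_B` and `ρ_n = 2` otherwise.
open Classical in
noncomputable def sgn (NB : Set ℕ) (n : ℕ) : ℝ := if n ∈ NB then -1 else 1

/-- The sign-variable `Q̃`-expansion value
`x = (-1)^{ρ_1} a_{i_1,1} + Σ_{n=2}^∞ (-1)^{ρ_n} a_{i_n,n} ∏_{j=1}^{n-1} q_{i_j,j}`. -/
noncomputable def svQtVal (NB : Set ℕ) (qt : ℕ → ℕ → ℝ) (i : ℕ → ℕ) : ℝ :=
  sgn NB 1 * aQt qt (i 1) 1 +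
    ∑' t : ℕ, sgn NB (t + 2) * aQt qt (i (t + 2)) (t + 2) * prodQt qt i (t + 1)

/-- The generalized shift operator for sign-variable `Q̃`-expansions:
`σ_m = Σ_{n=1}^{m-1} (-1)^{ρ_n} a_{i_n,n} ∏_{j=1}^{n-1} q_{i_j,j}
      + Σ_{l=m+1}^∞ (-1)^{ρ_l} a_{i_l,l} ∏_{j=1, j≠m}^{l-1} q_{i_j,j}`. -/
noncomputable def svQtSigma (NB : Set ℕ) (qt : ℕ → ℕ → ℝ) (i : ℕ → ℕ) (m : ℕ) : ℝ :=
  (∑ n ∈ Finset.Icc 1 (m - 1), sgn NB n * aQt qt (i n) n * prodQt qt i (n - 1)) +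
    ∑' t : ℕ, sgn NB (m + 1 + t) * aQt qt (i (m + 1 + t)) (m + 1 + t) *
      (prodQt qt i (m - 1) * ∏ j ∈ Finset.Icc (m + 1) (m + t), qt (i j) j)

noncomputable def svTerm (NB : Set ℕ) (qt : ℕ → ℕ → ℝ) (i : ℕ → ℕ) (n : ℕ) : ℝ :=
  sgn NB (n + 1) * aQt qt (i (n + 1)) (n + 1) * prodQt qt i n

lemma prodQt_succ (qt : ℕ → ℕ → ℝ) (i : ℕ → ℕ) (n : ℕ) :
    prodQt qt i (n + 1) = prodQt qt i n * qt (i (n + 1)) (n + 1) := by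
  unfold prodQt
  rw [Finset.prod_Icc_succ_top (by omega)]

lemma prodQt_split (qt : ℕ → ℕ → ℝ) (i : ℕ → ℕ) (p t : ℕ) :
    prodQt qt i (p + 1 + t) = prodQt qt i p * qt (i (p + 1)) (p + 1) *
      ∏ j ∈ Finset.Icc (p + 1 + 1) (p + 1 + t), qt (i j) j := by
  induction t with
  | zero => simp [prodQt_succ]
  | succ t ih =>
    rw [← add_assoc, prodQt_succ, ih, Finset.prod_Icc_succ_top (by omega)]
    ring

lemma svTerm_summable (NB : Set ℕ) (mS : ℕ → ℕ) (qt : ℕ → ℕ → ℝ)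
    (hpos : ∀ n, 1 ≤ n → ∀ d, d ≤ mS n → 0 < qt d n)
    (hsum : ∀ n, 1 ≤ n → ∑ d ∈ Finset.range (mS n + 1), qt d n = 1)
    (i : ℕ → ℕ) (hdig : ∀ n, 1 ≤ n → i n ≤ mS n) : Summable (svTerm NB qt i) := by
  have hP : ∀ n, 0 ≤ prodQt qt i n := by
    intro n
    apply Finset.prod_nonneg
    intro j hj
    have h1 := (Finset.mem_Icc.mp hj).1
    exact (hpos j h1 _ (hdig j h1)).le
  have ha0 : ∀ n, 0 ≤ aQt qt (i (n + 1)) (n + 1) := by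
    intro n
    apply Finset.sum_nonneg
    intro t ht
    have h1 := hdig (n + 1) (by omega)
    have h2 := Finset.mem_range.mp ht
    exact (hpos (n + 1) (by omega) t (by omega)).le
  have ha1 : ∀ n, aQt qt (i (n + 1)) (n + 1) + qt (i (n + 1)) (n + 1) ≤ 1 := by
    intro n
    have h1 := hdig (n + 1) (by omega)
    unfold aQt
    rw [← Finset.sum_range_succ (fun t => qt t (n + 1)), ← hsum (n + 1) (by omega)]
    apply Finset.sum_le_sum_of_subset_of_nonneg
    · intro x hx
      simp only [Finset.mem_range] at hx ⊢
      omega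
    · intro t ht _
      have h2 := Finset.mem_range.mp ht
      exact (hpos (n + 1) (by omega) t (by omega)).le
  have hS : Summable (fun n => aQt qt (i (n + 1)) (n + 1) * prodQt qt i n) := by
    apply summable_of_sum_range_le (c := 1) (fun n => mul_nonneg (ha0 n) (hP n))
    intro n
    have : ∑ k ∈ Finset.range n, aQt qt (i (k + 1)) (k + 1) * prodQt qt i k
        ≤ 1 - prodQt qt i n := by
      induction n with
      | zero => simp [prodQt]
      | succ n ih =>
        rw [Finset.sum_range_succ, prodQt_succ]
        nlinarith [mul_le_mul_of_nonneg_right (ha1 n) (hP n)]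
    linarith [hP n]
  apply Summable.of_norm_bounded hS
  intro n
  have hs : |sgn NB (n + 1)| = 1 := by
    unfold sgn
    split_ifs <;> simp
  rw [svTerm, Real.norm_eq_abs, abs_mul, abs_mul, hs, abs_of_nonneg (ha0 n), abs_of_nonneg (hP n),
    one_mul]

lemma svVal_eq (NB : Set ℕ) (qt : ℕ → ℕ → ℝ) (i : ℕ → ℕ) (hS : Summable (svTerm NB qt i))
    (m : ℕ) : svQtVal NB qt i =
      ∑ k ∈ Finset.range m, svTerm NB qt i k + ∑' t, svTerm NB qt i (t + m) := by
  rw [hS.sum_add_tsum_nat_add, hS.tsum_eq_zero_add]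
  simp [svQtVal, svTerm, prodQt]

lemma svSigma_eq (NB : Set ℕ) (qt : ℕ → ℕ → ℝ) (i : ℕ → ℕ) (p : ℕ)
    (hq : qt (i (p + 1)) (p + 1) ≠ 0) : svQtSigma NB qt i (p + 1) =
      ∑ k ∈ Finset.range p, svTerm NB qt i k +
        (∑' t, svTerm NB qt i (t + (p + 1))) / qt (i (p + 1)) (p + 1) := by
  unfold svQtSigma
  rw [← tsum_div_const]
  congr 1
  · rw [Finset.range_eq_Ico, Finset.sum_Ico_eq_sum_range, ← Finset.Ico_add_one_right_eq_Icc,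
      Finset.sum_Ico_eq_sum_range]
    simp [svTerm, add_comm]
  · apply tsum_congr
    intro t
    rw [svTerm, add_comm t (p + 1), prodQt_split, add_right_comm (p + 1) t 1]
    simp only [Nat.add_sub_cancel]
    field_simp

theorem stmt_19 (NB : Set ℕ) (mS : ℕ → ℕ) (qt : ℕ → ℕ → ℝ)
    (hmS : ∀ n, 1 ≤ n → 1 ≤ mS n)
    (hpos : ∀ n, 1 ≤ n → ∀ d, d ≤ mS n → 0 < qt d n)
    (hsum : ∀ n, 1 ≤ n → ∑ d ∈ Finset.range (mS n + 1), qt d n = 1)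
    (hzero : ∀ d : ℕ → ℕ, (∀ j, 1 ≤ j → d j ≤ mS j) →
      Filter.Tendsto (fun n => prodQt qt d n) Filter.atTop (nhds 0))
    (m : ℕ) (hm : 1 ≤ m) (i i' : ℕ → ℕ)
    (hdig : ∀ n, 1 ≤ n → i n ≤ mS n) (hdig' : ∀ n, 1 ≤ n → i' n ≤ mS n)
    (hagree : ∀ k, 1 ≤ k → k ≤ m → i k = i' k) :
    svQtSigma NB qt i m - svQtSigma NB qt i' m =
      (svQtVal NB qt i - svQtVal NB qt i') / qt (i m) m := by
  obtain ⟨p, rfl⟩ : ∃ p, m = p + 1 := ⟨m - 1, by omega⟩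
  have hq : qt (i (p + 1)) (p + 1) ≠ 0 := (hpos _ hm _ (hdig _ hm)).ne.symm
  have hq' : qt (i' (p + 1)) (p + 1) ≠ 0 := (hpos _ hm _ (hdig' _ hm)).ne.symm
  have hT : ∀ k, k < p + 1 → svTerm NB qt i k = svTerm NB qt i' k := by
    intro k hk
    have hP : prodQt qt i k = prodQt qt i' k := by
      apply Finset.prod_congr rfl
      intro j hj
      have := Finset.mem_Icc.mp hj
      rw [hagree j (by omega) (by omega)]
    rw [svTerm, svTerm, hP, hagree (k + 1) (by omega) (by omega)]
  have e1 : ∑ k ∈ Finset.range p, svTerm NB qt i k = ∑ k ∈ Finset.range p, svTerm NB qt i' k :=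
    Finset.sum_congr rfl fun k hk => hT k (by have := Finset.mem_range.mp hk; omega)
  have e2 : ∑ k ∈ Finset.range (p + 1), svTerm NB qt i k =
      ∑ k ∈ Finset.range (p + 1), svTerm NB qt i' k :=
    Finset.sum_congr rfl fun k hk => hT k (Finset.mem_range.mp hk)
  rw [svSigma_eq NB qt i p hq, svSigma_eq NB qt i' p hq',
    svVal_eq NB qt i (svTerm_summable NB mS qt hpos hsum i hdig) (p + 1),
    svVal_eq NB qt i' (svTerm_summable NB mS qt hpos hsum i' hdig') (p + 1), e1, e2,
    ← hagree (p + 1) hm le_rfl]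
  ring
end
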